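/- For every t ∈ [0,T] and all Ê-integrable X, X′, one has |L_t(X) − L_t(X′)| ≤ (2c̄/c̲) Ê[|X − X′|] and |U_t(X) − U_t(X′)| ≤ (2c̄/c̲) Ê[|X − X′|]. -/

import Mathlib

open MeasureTheory Set Filter

/-- The sublinear expectation `Ê[X] = sup_{P ∈ Ps} ∫ X dP`. -/
noncomputable def sublinE {Ω : Type*} [MeasurableSpace Ω] (Ps : Set (Measure Ω)) (X : Ω → ℝ) : ℝ :=
  sSup ((fun P => ∫ ω, X ω ∂P) '' Ps)

/-- `X` is Ê-integrable: measurable, integrable w.r.t. each `P ∈ Ps`, and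
`sup_{P ∈ Ps} ∫ |X| dP < ∞`. -/
def EIntegrable {Ω : Type*} [MeasurableSpace Ω] (Ps : Set (Measure Ω)) (X : Ω → ℝ) : Prop :=
  Measurable X ∧ (∀ P ∈ Ps, Integrable X P) ∧ ∃ M : ℝ, ∀ P ∈ Ps, (∫ ω, |X ω| ∂P) ≤ M

/-- Assumption (H_r) on the barriers `l, u` and the running loss function `hb`,
with constants `0 < cl ≤ cu` and `Ch > 0`. -/
def HrAssumption {Ω : Type*} [MeasurableSpace Ω] (T cl cu Ch : ℝ)
    (l u : ℝ → ℝ) (hb : ℝ → Ω → ℝ → ℝ) : Prop :=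
  0 < cl ∧ cl ≤ cu ∧ 0 < Ch ∧
  ContinuousOn l (Icc 0 T) ∧ ContinuousOn u (Icc 0 T) ∧
  (∃ M : ℝ, ∀ t ∈ Icc (0:ℝ) T, |l t| ≤ M ∧ |u t| ≤ M) ∧
  (∃ ε > 0, ∀ t ∈ Icc (0:ℝ) T, ε ≤ u t - l t) ∧
  (∀ t y, Measurable fun ω => hb t ω y) ∧
  (∀ ε > 0, ∃ δ > 0, ∀ (ω : Ω) (t t' y y' : ℝ),
      |t - t'| + |y - y'| < δ → |hb t ω y - hb t' ω y'| < ε) ∧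
  (∀ t ω, StrictMono (hb t ω)) ∧
  (∀ t ω y, |hb t ω y| ≤ Ch * (1 + |y|)) ∧
  (∀ t ω y y', cl * |y - y'| ≤ |hb t ω y - hb t ω y'| ∧
    |hb t ω y - hb t ω y'| ≤ cu * |y - y'|)

/-- `H̄(t, x, X) = Ê[hb(t, x + X − Ê[X])]`. -/
noncomputable def Hbar {Ω : Type*} [MeasurableSpace Ω] (Ps : Set (Measure Ω))
    (hb : ℝ → Ω → ℝ → ℝ) (t x : ℝ) (X : Ω → ℝ) : ℝ :=
  sublinE Ps (fun ω => hb t ω (x + X ω - sublinE Ps X))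

/-- A family `(S_t)_{t ∈ [0,T]}` of Ê-integrable random variables which is continuous in mean. -/
def MeanContinuous {Ω : Type*} [MeasurableSpace Ω] (Ps : Set (Measure Ω)) (T : ℝ)
    (S : ℝ → Ω → ℝ) : Prop :=
  (∀ t ∈ Icc (0:ℝ) T, EIntegrable Ps (S t)) ∧
  ∀ t ∈ Icc (0:ℝ) T,
    Tendsto (fun s => sublinE Ps fun ω => |S s ω - S t ω|) (nhdsWithin t (Icc 0 T)) (nhds 0)

/-- The minimality (Skorokhod) condition in its equivalent increment form: `R` may only
increase on intervals where `φ` stays strictly below `u` and may only decrease on intervals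
where `φ` stays strictly above `l`. -/
def MinimalityIncr (T : ℝ) (φ l u R : ℝ → ℝ) : Prop :=
  ∀ s t : ℝ, 0 ≤ s → s < t → t ≤ T →
    ((∀ v, s < v → v ≤ t → φ v < u v) → R s ≤ R t) ∧
    ((∀ v, s < v → v ≤ t → l v < φ v) → R t ≤ R s)

/-- `(Y, R)` solves the backward Skorokhod problem with sublinear expectation for the data
`(Ybar, hb, l, u)`. -/
def IsBSPsol {Ω : Type*} [MeasurableSpace Ω] (Ps : Set (Measure Ω)) (T : ℝ)
    (hb : ℝ → Ω → ℝ → ℝ) (l u : ℝ → ℝ) (Ybar Y : ℝ → Ω → ℝ) (R : ℝ → ℝ) : Prop :=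
  (∀ t ∈ Icc (0:ℝ) T, ∀ ω, Y t ω = Ybar t ω + R T - R t) ∧
  (∀ t ∈ Icc (0:ℝ) T, l t ≤ sublinE Ps (fun ω => hb t ω (Y t ω)) ∧
    sublinE Ps (fun ω => hb t ω (Y t ω)) ≤ u t) ∧
  ContinuousOn R (Icc 0 T) ∧ BoundedVariationOn R (Icc 0 T) ∧ R 0 = 0 ∧
  MinimalityIncr T (fun v => sublinE Ps (fun ω => hb v ω (Y v ω))) l u R

theorem sublinE_ge {Ω : Type*} [MeasurableSpace Ω] {Ps : Set (Measure Ω)} {X : Ω → ℝ}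
    (hX : EIntegrable Ps X) {P : Measure Ω} (hP : P ∈ Ps) : ∫ ω, X ω ∂P ≤ sublinE Ps X := by
  obtain ⟨_, _, M, hM⟩ := hX
  refine le_csSup ⟨M, ?_⟩ ⟨P, hP, rfl⟩
  rintro _ ⟨Q, hQ, rfl⟩
  exact (le_abs_self _).trans (abs_integral_le_integral_abs.trans (hM Q hQ))

theorem sublinE_le {Ω : Type*} [MeasurableSpace Ω] {Ps : Set (Measure Ω)} (hPs : Ps.Nonempty)
    {X : Ω → ℝ} {c : ℝ} (h : ∀ P ∈ Ps, ∫ ω, X ω ∂P ≤ c) : sublinE Ps X ≤ c := by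
  refine csSup_le (hPs.image _) ?_
  rintro _ ⟨Q, hQ, rfl⟩
  exact h Q hQ

theorem EIntegrable.abs_sub {Ω : Type*} [MeasurableSpace Ω] {Ps : Set (Measure Ω)}
    {X X' : Ω → ℝ} (hX : EIntegrable Ps X) (hX' : EIntegrable Ps X') :
    EIntegrable Ps (fun ω => |X ω - X' ω|) := by
  obtain ⟨m, i, M, hM⟩ := hX
  obtain ⟨m', i', M', hM'⟩ := hX'
  refine ⟨(m.sub m').abs, fun P hP => ((i P hP).sub (i' P hP)).abs, M + M', fun P hP => ?_⟩
  have := integral_mono ((i P hP).sub (i' P hP)).abs.abs ((i P hP).abs.add (i' P hP).abs)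
    (fun ω => by
      simp only [Pi.add_apply, Pi.sub_apply, abs_abs]
      exact _root_.abs_sub (X ω) (X' ω))
  have h2 := integral_add (i P hP).abs (i' P hP).abs
  have h3 := hM P hP
  have h4 := hM' P hP
  simp only [Pi.add_apply, Pi.sub_apply] at this h2
  linarith

theorem sublinE_sub_le {Ω : Type*} [MeasurableSpace Ω] {Ps : Set (Measure Ω)} (hPs : Ps.Nonempty)
    {X X' : Ω → ℝ} (hX : EIntegrable Ps X) (hX' : EIntegrable Ps X') :
    sublinE Ps X ≤ sublinE Ps X' + sublinE Ps (fun ω => |X ω - X' ω|) := by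
  have hD := hX.abs_sub hX'
  refine sublinE_le hPs fun P hP => ?_
  have h1 := integral_mono (hX.2.1 P hP) ((hX'.2.1 P hP).add (hD.2.1 P hP))
    (fun ω => by
      simp only [Pi.add_apply]
      linarith [le_abs_self (X ω - X' ω)])
  have h2 := integral_add (hX'.2.1 P hP) (hD.2.1 P hP)
  have h3 := sublinE_ge hX' hP
  have h4 := sublinE_ge hD hP
  simp only [Pi.add_apply] at h1 h2
  linarith

theorem hb_EIntegrable {Ω : Type*} [MeasurableSpace Ω] {T cl cu Ch : ℝ}
    {Ps : Set (Measure Ω)} (hprob : ∀ P ∈ Ps, IsProbabilityMeasure P)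
    {l u : ℝ → ℝ} {hb : ℝ → Ω → ℝ → ℝ} (hHr : HrAssumption T cl cu Ch l u hb)
    (t c : ℝ) {X : Ω → ℝ} (hX : EIntegrable Ps X) :
    EIntegrable Ps (fun ω => hb t ω (X ω + c)) := by
  obtain ⟨hcl, hcu, hCh, -, -, -, -, hm, huc, hmono, hgr, hlip⟩ := hHr
  obtain ⟨m, i, M, hM⟩ := hX
  have hcont : ∀ ω, Continuous (hb t ω) := by
    intro ω
    refine Metric.continuous_iff.2 fun b ε hε => ?_
    obtain ⟨δ, hδ, h⟩ := huc ε hε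
    refine ⟨δ, hδ, fun a ha => ?_⟩
    rw [Real.dist_eq] at *
    exact h ω t t a b (by simpa using ha)
  have hunc : Measurable (Function.uncurry fun y ω => hb t ω y) :=
    measurable_uncurry_of_continuous_of_measurable (u := fun y ω => hb t ω y) hcont (hm t)
  have hmeas : Measurable (fun ω => hb t ω (X ω + c)) :=
    hunc.comp ((m.add_const c).prodMk measurable_id)
  have hbd : ∀ ω, |hb t ω (X ω + c)| ≤ Ch * (1 + |c|) + Ch * |X ω| := fun ω => by
    have := hgr t ω (X ω + c)
    have := mul_le_mul_of_nonneg_left (abs_add_le (X ω) c) hCh.le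
    linarith
  have hint : ∀ P ∈ Ps, Integrable (fun ω => Ch * (1 + |c|) + Ch * |X ω|) P := fun P hP => by
    have := hprob P hP
    exact (integrable_const _).add ((i P hP).abs.const_mul Ch)
  have hi : ∀ P ∈ Ps, Integrable (fun ω => hb t ω (X ω + c)) P := fun P hP =>
    (hint P hP).mono' hmeas.aestronglyMeasurable (Eventually.of_forall hbd)
  refine ⟨hmeas, hi, Ch * (1 + |c|) + Ch * M, fun P hP => ?_⟩
  have := hprob P hP
  have h1 := integral_mono (hi P hP).abs (hint P hP) hbd
  rw [integral_add (integrable_const _) ((i P hP).abs.const_mul Ch)] at h1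
  simp only [integral_const, probReal_univ, one_smul] at h1
  rw [integral_const_mul] at h1
  beta_reduce
  have := mul_le_mul_of_nonneg_left (hM P hP) hCh.le
  linarith

theorem half_bound {Ω : Type*} [MeasurableSpace Ω] {T cl cu Ch : ℝ}
    {Ps : Set (Measure Ω)} (hPs : Ps.Nonempty) (hprob : ∀ P ∈ Ps, IsProbabilityMeasure P)
    {l u : ℝ → ℝ} {hb : ℝ → Ω → ℝ → ℝ} (hHr : HrAssumption T cl cu Ch l u hb)
    (t a b : ℝ) {X X' : Ω → ℝ} (hX : EIntegrable Ps X) (hX' : EIntegrable Ps X')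
    (h : Hbar Ps hb t a X = Hbar Ps hb t b X') (hab : b ≤ a) :
    a - b ≤ (2 * cu / cl) * sublinE Ps (fun ω => |X ω - X' ω|) := by
  have hD := hX.abs_sub hX'
  have e1 := sublinE_sub_le hPs hX hX'
  have e2 := sublinE_sub_le hPs hX' hX
  simp only [abs_sub_comm (X' _) (X _)] at e2
  have hf := hb_EIntegrable hprob hHr t (a - sublinE Ps X) hX
  have hg := hb_EIntegrable hprob hHr t (b - sublinE Ps X') hX'
  have hf' : Hbar Ps hb t a X = sublinE Ps (fun ω => hb t ω (X ω + (a - sublinE Ps X))) := by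
    unfold Hbar; congr 1; funext ω; congr 1; ring
  have hg' : Hbar Ps hb t b X' = sublinE Ps (fun ω => hb t ω (X' ω + (b - sublinE Ps X'))) := by
    unfold Hbar; congr 1; funext ω; congr 1; ring
  obtain ⟨hcl, hcu, hCh, -, -, -, -, hm, huc, hmono, hgr, hlip⟩ := hHr
  have hcu0 : 0 ≤ cu := hcl.le.trans hcu
  rw [hf', hg'] at h
  set EX := sublinE Ps X
  set EX' := sublinE Ps X'
  set D := sublinE Ps (fun ω => |X ω - X' ω|)
  have key : ∀ ω, hb t ω (X' ω + (b - EX')) ≤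
      hb t ω (X ω + (a - EX)) + (cu * |X ω - X' ω| + (cu * D - cl * (a - b))) := fun ω => by
    have k1 := (hlip t ω (X ω + (a - EX)) (X ω + (b - EX))).1
    have k2 := (hmono t ω).monotone (show X ω + (b - EX) ≤ X ω + (a - EX) by linarith)
    rw [abs_of_nonneg (by linarith), abs_of_nonneg (by linarith)] at k1
    have k3 := (hlip t ω (X' ω + (b - EX')) (X ω + (b - EX))).2
    have k4 := le_abs_self (hb t ω (X' ω + (b - EX')) - hb t ω (X ω + (b - EX)))
    have k5 : |X' ω + (b - EX') - (X ω + (b - EX))| ≤ |X ω - X' ω| + D := by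
      rw [abs_le]
      constructor
      · linarith [le_abs_self (X ω - X' ω)]
      · linarith [neg_abs_le (X ω - X' ω)]
    have k6 := mul_le_mul_of_nonneg_left k5 hcu0
    linarith
  have fin : sublinE Ps (fun ω => hb t ω (X' ω + (b - EX'))) ≤
      sublinE Ps (fun ω => hb t ω (X ω + (a - EX))) + (cu * D + (cu * D - cl * (a - b))) := by
    refine sublinE_le hPs fun P hP => ?_
    have := hprob P hP
    have i1 := (hD.2.1 P hP).const_mul cu
    have i2 : Integrable (fun ω => cu * |X ω - X' ω| + (cu * D - cl * (a - b))) P :=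
      i1.add (integrable_const _)
    have h1 := integral_mono (hg.2.1 P hP) ((hf.2.1 P hP).add i2) key
    simp only [Pi.add_apply] at h1
    rw [integral_add (hf.2.1 P hP) i2, integral_add i1 (integrable_const _),
      integral_const_mul] at h1
    simp only [integral_const, probReal_univ, one_smul] at h1
    have h2 := sublinE_ge hf hP
    have h3 := mul_le_mul_of_nonneg_left (sublinE_ge hD hP) hcu0
    linarith
  rw [div_mul_eq_mul_div, le_div_iff₀ hcl]
  linarith

theorem full_bound {Ω : Type*} [MeasurableSpace Ω] {T cl cu Ch : ℝ}
    {Ps : Set (Measure Ω)} (hPs : Ps.Nonempty) (hprob : ∀ P ∈ Ps, IsProbabilityMeasure P)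
    {l u : ℝ → ℝ} {hb : ℝ → Ω → ℝ → ℝ} (hHr : HrAssumption T cl cu Ch l u hb)
    (t a b : ℝ) {X X' : Ω → ℝ} (hX : EIntegrable Ps X) (hX' : EIntegrable Ps X')
    (h : Hbar Ps hb t a X = Hbar Ps hb t b X') :
    |a - b| ≤ (2 * cu / cl) * sublinE Ps (fun ω => |X ω - X' ω|) := by
  rcases le_total b a with hab | hab
  · rw [abs_of_nonneg (by linarith)]
    exact half_bound hPs hprob hHr t a b hX hX' h hab
  · rw [abs_sub_comm, abs_of_nonneg (by linarith)]
    have := half_bound hPs hprob hHr t b a hX' hX h.symm hab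
    simpa only [abs_sub_comm (X' _) (X _)] using this

/-- For `t ∈ [0,T]` and Ê-integrable `X, X'`,
`|L_t(X) − L_t(X')| ≤ (2c̄/c̲) Ê[|X − X'|]` and `|U_t(X) − U_t(X')| ≤ (2c̄/c̲) Ê[|X − X'|]`. -/
theorem stmt4 {Ω : Type*} [MeasurableSpace Ω] (T cl cu Ch : ℝ) (hT : 0 < T)
    (Ps : Set (Measure Ω)) (hPs : Ps.Nonempty) (hprob : ∀ P ∈ Ps, IsProbabilityMeasure P)
    (l u : ℝ → ℝ) (hb : ℝ → Ω → ℝ → ℝ) (hHr : HrAssumption T cl cu Ch l u hb)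
    (L U : ℝ → (Ω → ℝ) → ℝ)
    (hL : ∀ t ∈ Icc (0:ℝ) T, ∀ X : Ω → ℝ, EIntegrable Ps X → Hbar Ps hb t (L t X) X = l t)
    (hU : ∀ t ∈ Icc (0:ℝ) T, ∀ X : Ω → ℝ, EIntegrable Ps X → Hbar Ps hb t (U t X) X = u t)
    (t : ℝ) (ht : t ∈ Icc (0:ℝ) T)
    (X X' : Ω → ℝ) (hX : EIntegrable Ps X) (hX' : EIntegrable Ps X') :
    |L t X - L t X'| ≤ (2 * cu / cl) * sublinE Ps (fun ω => |X ω - X' ω|) ∧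
    |U t X - U t X'| ≤ (2 * cu / cl) * sublinE Ps (fun ω => |X ω - X' ω|) := by
  exact ⟨full_bound hPs hprob hHr t _ _ hX hX' ((hL t ht X hX).trans (hL t ht X' hX').symm),
    full_bound hPs hprob hHr t _ _ hX hX' ((hU t ht X hX).trans (hU t ht X' hX').symm)⟩
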